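/- Let f : S^{n−1} → (0,∞) and φ : (0,∞) → (0,∞) be smooth, and suppose ℜ : (0,∞) → (0,∞) is given by ℜ(s) = ∫₀ˢ dt/(t φ(t)) (finite for all s > 0), so that ℜ is strictly increasing. Then along any smooth, origin-symmetric, strictly convex solution of the flow on [0,T), the functional P(t) = ∫_{S^{n−1}} ℜ(1/h(x,t)) f(x) dx is non-decreasing in t. -/

import Mathlib

/-!
Since `ℜ'(s) = 1 / (s φ(s))`, differentiating `P` along the flow gives
`P' = -∫ f h_t / (h φ(1/h)) = -∫ g + η ∫ g² q`, where `g = f / φ(1/h)`, `q = r ^ n / (h det)`,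
`r = (|∇h|² + h²)^{1/2}`, `det = det(∇²h + hI)` and `η = |S^{n-1}| / ∫ g`. By Cauchy–Schwarz
`(∫ g)² ≤ (∫ g² q) (∫ 1/q)`, so `P' ≥ 0` follows from `∫ 1/q = ∫ h det / r ^ n ≤ |S^{n-1}|`
(`integral_deriv_nonneg`).

The last inequality expresses that `h det / r ^ n` is the Jacobian of the radial Gauss map
`x ↦ ∇F(x) / |∇F(x)|` of the sphere, `F` being the 1-homogeneous extension of `h`, and that this
map is injective. It is proved in `ℝⁿ` (`lintegral_gauss_le`): the 1-homogeneous map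
`G(x) = |x| ∇F(x)` is injective off the origin by strict convexity (`gaussExt_injOn`), its Jacobian
determinant at a unit vector is `F det` (`det_gaussDeriv`), and it maps the star-shaped region
`{|G| < 1}` into the unit ball. Comparing volumes, with the volume of the region written in polar
coordinates, gives `(1/n) ∫ F det / r ^ n ≤ vol(B) = |S^{n-1}| / n`, where `r = |∇F|` on the sphere
(`radTerm_eq`).

Differentiation under the integral sign is justified on compact subintervals of `(0, T)`, where
everything is continuous on a compact set; monotonicity on `[0, T)` then uses the continuity of `P`
up to `t = 0`.
-/

noncomputable section

open Metric MeasureTheory Set Filter Topology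
open scoped RealInnerProductSpace NNReal

/-- Abbreviation for `n`-dimensional Euclidean space. -/
abbrev Euc (n : ℕ) : Type := EuclideanSpace ℝ (Fin n)

/-- The unit sphere `S^{n-1}` in `ℝⁿ`, as a set. -/
abbrev USphere (n : ℕ) : Set (Euc n) := Metric.sphere (0 : Euc n) 1

/-- The surface (spherical Lebesgue) measure on the unit sphere. -/
def sphMeasure (n : ℕ) : Measure (USphere n) :=
  (volume : Measure (Euc n)).toSphere

/-- Total surface measure `|S^{n-1}|` of the unit sphere. -/
def sphArea (n : ℕ) : ℝ := (sphMeasure n Set.univ).toReal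

/-- Integral over the unit sphere with respect to the spherical Lebesgue measure. -/
def sphInt (n : ℕ) (g : Euc n → ℝ) : ℝ :=
  ∫ x : USphere n, g x ∂(sphMeasure n)

/-- The covariant (spherical) gradient on `S^{n-1}` of the restriction of `F`,
i.e. the tangential component of the Euclidean gradient of `F`. -/
def sphGrad (n : ℕ) (F : Euc n → ℝ) (x : Euc n) : Euc n :=
  gradient F x - ⟪gradient F x, x⟫ • x

/-- `√(|∇h|² + h²)` for the (1-homogeneous extension of the) function `F` at `x`. -/
def radTerm (n : ℕ) (F : Euc n → ℝ) (x : Euc n) : ℝ :=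
  Real.sqrt (‖sphGrad n F x‖ ^ 2 + F x ^ 2)

/-- The Euclidean Hessian operator of `F` at `x`. For a positively 1-homogeneous `F`
this operator kills `x` and restricts on `x^⊥` to the matrix `∇²h + hI` of the
spherical Hessian. -/
def hessOp (n : ℕ) (F : Euc n → ℝ) (x : Euc n) : Euc n →L[ℝ] Euc n :=
  fderiv ℝ (gradient F) x

/-- `det(∇²h + hI)` at `x ∈ S^{n-1}`: the determinant of the restriction of the Euclidean
Hessian of the 1-homogeneous extension to `x^⊥`, computed as the determinant of
`Hess F + x ⊗ x` on all of `ℝⁿ` (the Hessian of a 1-homogeneous function kills `x`). -/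
def sphDet (n : ℕ) (F : Euc n → ℝ) (x : Euc n) : ℝ :=
  LinearMap.det
    ((hessOp n F x + (innerSL ℝ x).smulRight x : Euc n →L[ℝ] Euc n) : Euc n →ₗ[ℝ] Euc n)

/-- `F` is the (1-homogeneously extended) support function of a smooth strictly convex
body with the origin in its interior: it is smooth away from the origin, positively
1-homogeneous, positive, and `∇²h + hI` is positive definite on each tangent space. -/
structure IsSupportFn (n : ℕ) (F : Euc n → ℝ) : Prop where
  smooth : ContDiffOn ℝ (⊤ : ℕ∞) F {(0 : Euc n)}ᶜ
  homog : ∀ c : ℝ, 0 < c → ∀ x : Euc n, F (c • x) = c * F x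
  pos : ∀ x ∈ USphere n, 0 < F x
  posdef : ∀ x ∈ USphere n, ∀ v : Euc n, v ≠ 0 → ⟪x, v⟫ = 0 →
    0 < ⟪v, hessOp n F x v⟫

/-- The convex body determined by the support function `F`. -/
def bodyOf (n : ℕ) (F : Euc n → ℝ) : Set (Euc n) :=
  {y | ∀ x ∈ USphere n, ⟪x, y⟫ ≤ F x}

/-- The radial function of the convex body with support function `F`. -/
def radialFn (n : ℕ) (F : Euc n → ℝ) (u : Euc n) : ℝ :=
  sSup {r : ℝ | 0 < r ∧ r • u ∈ bodyOf n F}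

/-- The normalization factor `η` of the flow. -/
def flowEta (n : ℕ) (f : Euc n → ℝ) (φ : ℝ → ℝ) (h : Euc n → ℝ) : ℝ :=
  sphArea n / sphInt n (fun x => f x / φ (1 / h x))

/-- `H : ℝ → Euc n → ℝ` is (the family of support functions of) a smooth, origin-symmetric,
strictly convex solution of the flow on the time interval `J`. -/
structure IsFlowSol (n : ℕ) (f : Euc n → ℝ) (φ : ℝ → ℝ) (J : Set ℝ)
    (H : ℝ → Euc n → ℝ) : Prop where
  smooth : ContDiffOn ℝ (⊤ : ℕ∞) (fun p : ℝ × Euc n => H p.1 p.2) (J ×ˢ {(0 : Euc n)}ᶜ)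
  body : ∀ t ∈ J, IsSupportFn n (H t)
  symm : ∀ t ∈ J, ∀ x : Euc n, H t (-x) = H t x
  eqn : ∀ t ∈ J, ∀ x ∈ USphere n,
    HasDerivWithinAt (fun s => H s x)
      (H t x - flowEta n f φ (H t) * f x * radTerm n (H t) x ^ n /
        (φ (1 / H t x) * sphDet n (H t) x)) J t

/-- Condition (i) of the Orlicz-Aleksandrov flow theorem. -/
def CondI (n : ℕ) (f : Euc n → ℝ) (φ : ℝ → ℝ) (h₀ : Euc n → ℝ) : Prop :=
  ∃ R : ℝ → ℝ, (∀ s ∈ Ioi (0 : ℝ), 0 < R s) ∧ StrictMonoOn R (Ioi 0) ∧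
    Tendsto R (𝓝[>] (0 : ℝ)) (𝓝 0) ∧ Tendsto R atTop atTop ∧
    (∀ s ∈ Ioi (0 : ℝ), IntegrableOn (fun t => 1 / (t * φ t)) (Ioo 0 s) ∧
      R s = ∫ t in Ioo (0 : ℝ) s, 1 / (t * φ t)) ∧
    (∀ s ∈ Ioi (0 : ℝ), HasDerivAt R (1 / (s * φ s)) s ∧ 1 / (s * φ s) ≠ 0) ∧
    ∃ Chat : ℝ, 0 < Chat ∧
      (∀ θ ∈ USphere n,
        sphInt n (fun x => f x * R (1 / |⟪x, θ⟫|)) ≤ Chat) ∧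
      Chat < sphInt n (fun x => f x * R (1 / h₀ x))

/-- Condition (ii) of the Orlicz-Aleksandrov flow theorem. -/
def CondII (φ : ℝ → ℝ) : Prop :=
  ∃ R : ℝ → ℝ, (∀ s ∈ Ioi (0 : ℝ), 0 < R s) ∧ StrictAntiOn R (Ioi 0) ∧
    Tendsto R (𝓝[>] (0 : ℝ)) atTop ∧ Tendsto R atTop (𝓝 0) ∧
    (∀ s ∈ Ioi (0 : ℝ), IntegrableOn (fun t => 1 / (t * φ t)) (Ioi s) ∧
      R s = ∫ t in Ioi s, 1 / (t * φ t)) ∧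
    (∀ s ∈ Ioi (0 : ℝ), HasDerivAt R (-(1 / (s * φ s))) s ∧ 1 / (s * φ s) ≠ 0)

/-! ### Support functions: gradient, Hessian and homogeneity -/

section SupportFn

variable {n : ℕ} {F : Euc n → ℝ}

theorem gradient_contDiffOn (hF : IsSupportFn n F) :
    ContDiffOn ℝ (⊤ : ℕ∞) (gradient F) {(0 : Euc n)}ᶜ := by
  have h1 : ContDiffOn ℝ (⊤ : ℕ∞) (fderiv ℝ F) {(0 : Euc n)}ᶜ :=
    hF.smooth.fderiv_of_isOpen isOpen_compl_singleton (by simp)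
  exact ((InnerProductSpace.toDual ℝ (Euc n)).symm.toContinuousLinearEquiv.contDiff).comp_contDiffOn
    h1

theorem hasFDerivAt_of_ne (hF : IsSupportFn n F) {x : Euc n} (hx : x ≠ 0) :
    HasFDerivAt F (innerSL ℝ (gradient F x)) x := by
  have h := (hF.smooth.contDiffAt (isOpen_compl_singleton.mem_nhds hx)).differentiableAt (by simp)
  exact h.hasGradientAt.hasFDerivAt

theorem hasFDerivAt_gradient (hF : IsSupportFn n F) {x : Euc n} (hx : x ≠ 0) :
    HasFDerivAt (gradient F) (hessOp n F x) x :=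
  (((gradient_contDiffOn hF).contDiffAt (isOpen_compl_singleton.mem_nhds hx)).differentiableAt
    (by simp)).hasFDerivAt

theorem hessOp_contDiffOn (hF : IsSupportFn n F) :
    ContDiffOn ℝ (⊤ : ℕ∞) (hessOp n F) {(0 : Euc n)}ᶜ :=
  (gradient_contDiffOn hF).fderiv_of_isOpen isOpen_compl_singleton (by simp)

theorem inner_hessOp (hF : IsSupportFn n F) {x : Euc n} (hx : x ≠ 0) (u v : Euc n) :
    ⟪hessOp n F x u, v⟫ = fderiv ℝ (fderiv ℝ F) x u v := by
  have h1 : ContDiffOn ℝ (⊤ : ℕ∞) (fderiv ℝ F) {(0 : Euc n)}ᶜ :=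
    hF.smooth.fderiv_of_isOpen isOpen_compl_singleton (by simp)
  have h2 : HasFDerivAt (fderiv ℝ F) (fderiv ℝ (fderiv ℝ F) x) x :=
    ((h1.contDiffAt (isOpen_compl_singleton.mem_nhds hx)).differentiableAt (by simp)).hasFDerivAt
  have h3 := ((InnerProductSpace.toDual ℝ
    (Euc n)).symm.toContinuousLinearEquiv : StrongDual ℝ (Euc n) ≃L[ℝ] Euc n).hasFDerivAt.comp x h2
  have h4 := (hasFDerivAt_gradient hF hx).unique h3
  rw [h4]
  exact InnerProductSpace.toDual_symm_apply

theorem hessOp_symm (hF : IsSupportFn n F) {x : Euc n} (hx : x ≠ 0) (u v : Euc n) :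
    ⟪hessOp n F x u, v⟫ = ⟪u, hessOp n F x v⟫ := by
  rw [inner_hessOp hF hx, real_inner_comm, inner_hessOp hF hx]
  exact ((hF.smooth.contDiffAt (isOpen_compl_singleton.mem_nhds hx)).isSymmSndFDerivAt
    (by rw [minSmoothness_of_isRCLikeNormedField]; exact WithTop.coe_le_coe.2 (le_top : (2 : ℕ∞) ≤ ⊤))) u v

theorem gradient_smul (hF : IsSupportFn n F) {x : Euc n} (hx : x ≠ 0) {c : ℝ} (hc : 0 < c) :
    gradient F (c • x) = gradient F x := by
  have hcx : c • x ≠ 0 := smul_ne_zero hc.ne' hx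
  have h1 : HasFDerivAt (fun y => F (c • y))
      ((innerSL ℝ (gradient F (c • x))).comp (c • ContinuousLinearMap.id ℝ (Euc n))) x :=
    (hasFDerivAt_of_ne hF hcx).comp x ((hasFDerivAt_id x).const_smul c)
  have h2 : HasFDerivAt (fun y => F (c • y)) (c • innerSL ℝ (gradient F x)) x := by
    have : (fun y => F (c • y)) = fun y => c * F y := funext fun y => hF.homog c hc y
    rw [this]
    exact (hasFDerivAt_of_ne hF hx).const_mul c
  have h3 := h1.unique h2
  refine ext_inner_right ℝ fun v => ?_
  have h4 : ⟪gradient F (c • x), c • v⟫ = c * ⟪gradient F x, v⟫ :=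
    congrArg (fun L : Euc n →L[ℝ] ℝ => L v) h3
  rw [real_inner_smul_right] at h4
  exact mul_left_cancel₀ hc.ne' h4

theorem inner_gradient_self (hF : IsSupportFn n F) {x : Euc n} (hx : x ≠ 0) :
    ⟪gradient F x, x⟫ = F x := by
  have h1 : HasDerivAt (fun s : ℝ => F (s • x)) (innerSL ℝ (gradient F ((1 : ℝ) • x))
      ((1 : ℝ) • x)) 1 := by
    exact (hasFDerivAt_of_ne hF (x := (1 : ℝ) • x) (by simpa using hx)).comp_hasDerivAt (1 : ℝ)
      ((hasDerivAt_id (1 : ℝ)).smul_const x)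
  have h2 : HasDerivAt (fun s : ℝ => F (s • x)) (F x) 1 := by
    have : HasDerivAt (fun s : ℝ => s * F x) (F x) 1 := by
      simpa using (hasDerivAt_id (1 : ℝ)).mul_const (F x)
    refine this.congr_of_eventuallyEq ?_
    filter_upwards [lt_mem_nhds (zero_lt_one' ℝ)] with s hs using hF.homog s hs x
  have h3 := h1.unique h2
  rwa [one_smul] at h3

theorem hessOp_smul (hF : IsSupportFn n F) {x : Euc n} (hx : x ≠ 0) {c : ℝ} (hc : 0 < c) :
    c • hessOp n F (c • x) = hessOp n F x := by
  have hcx : c • x ≠ 0 := smul_ne_zero hc.ne' hx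
  have h1 : HasFDerivAt (fun y => gradient F (c • y))
      ((hessOp n F (c • x)).comp (c • ContinuousLinearMap.id ℝ (Euc n))) x :=
    (hasFDerivAt_gradient hF hcx).comp x ((hasFDerivAt_id x).const_smul c)
  have h2 : HasFDerivAt (fun y => gradient F (c • y)) (hessOp n F x) x := by
    refine (hasFDerivAt_gradient hF hx).congr_of_eventuallyEq ?_
    filter_upwards [isOpen_compl_singleton.mem_nhds hx] with y hy using gradient_smul hF hy hc
  have h3 := h1.unique h2
  rw [← h3]
  ext v : 1
  simp

theorem hessOp_self (hF : IsSupportFn n F) {x : Euc n} (hx : x ≠ 0) :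
    hessOp n F x x = 0 := by
  have h1 : HasDerivAt (fun s : ℝ => gradient F (s • x)) (hessOp n F ((1 : ℝ) • x)
      ((1 : ℝ) • x)) 1 := by
    exact (hasFDerivAt_gradient hF (x := (1 : ℝ) • x) (by simpa using hx)).comp_hasDerivAt
      (1 : ℝ) ((hasDerivAt_id (1 : ℝ)).smul_const x)
  have h2 : HasDerivAt (fun s : ℝ => gradient F (s • x)) 0 1 := by
    refine (hasDerivAt_const (1 : ℝ) (gradient F x)).congr_of_eventuallyEq ?_
    filter_upwards [lt_mem_nhds (zero_lt_one' ℝ)] with s hs using gradient_smul hF hx hs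
  have h3 := h1.unique h2
  rwa [one_smul] at h3

/-- The Hessian form at `y ≠ 0` is positive on every vector that is not a multiple of `y`: the
component along `y` does not contribute, and homogeneity moves `y` to the sphere. -/
theorem hessOp_pos (hF : IsSupportFn n F) {y : Euc n} (hy : y ≠ 0) {v : Euc n}
    (hv : ∀ a : ℝ, v ≠ a • y) : 0 < ⟪hessOp n F y v, v⟫ := by
  have hny : 0 < ‖y‖ := norm_pos_iff.2 hy
  set e : Euc n := ‖y‖⁻¹ • y with he
  have he1 : ‖e‖ = 1 := by rw [he, norm_smul, norm_inv, norm_norm, inv_mul_cancel₀ hny.ne']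
  have he0 : e ≠ 0 := by rw [← norm_pos_iff, he1]; exact one_pos
  set w : Euc n := v - ⟪e, v⟫ • e with hw
  have hw0 : w ≠ 0 := by
    intro h
    apply hv (⟪e, v⟫ * ‖y‖⁻¹)
    rw [mul_smul, ← he]
    exact sub_eq_zero.1 h
  have hew : ⟪e, w⟫ = 0 := by
    rw [hw, inner_sub_right, inner_smul_right, real_inner_self_eq_norm_sq, he1]; ring
  have h1 := hF.posdef e (by simp [he1]) w hw0 hew
  have h2 : hessOp n F e v = hessOp n F e w := by
    rw [hw, map_sub, map_smul, hessOp_self hF he0, smul_zero, sub_zero]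
  have h3 : ⟪hessOp n F e v, v⟫ = ⟪w, hessOp n F e w⟫ := by
    rw [h2, hessOp_symm hF he0, h2]
  rw [← h3] at h1
  rw [← hessOp_smul hF hy (inv_pos.2 hny), ← he]
  rw [smul_apply, real_inner_smul_left]
  positivity

theorem pos_of_ne (hF : IsSupportFn n F) {x : Euc n} (hx : x ≠ 0) : 0 < F x := by
  have hnx : 0 < ‖x‖ := norm_pos_iff.2 hx
  have h := hF.pos (‖x‖⁻¹ • x) (by simp [norm_smul, hnx.ne'])
  rw [hF.homog _ (inv_pos.2 hnx)] at h
  exact (pos_iff_pos_of_mul_pos h).1 (inv_pos.2 hnx)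

theorem gradient_ne_zero (hF : IsSupportFn n F) {x : Euc n} (hx : x ≠ 0) : gradient F x ≠ 0 := by
  intro h
  have := inner_gradient_self hF hx
  rw [h, inner_zero_left] at this
  exact (pos_of_ne hF hx).ne this

/-- Strict monotonicity of the gradient along a segment that spans a plane with the origin. -/
theorem inner_gradient_lt (hF : IsSupportFn n F) {x z : Euc n}
    (hli : ∀ a b : ℝ, a • x + b • z = 0 → a = 0 ∧ b = 0) :
    ⟪gradient F x, z - x⟫ < ⟪gradient F z, z - x⟫ := by
  have hne : ∀ s : ℝ, x + s • (z - x) ≠ 0 := by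
    intro s hs
    have := hli (1 - s) s (by rw [← hs]; module)
    linarith [this.1, this.2]
  have hd : ∀ s : ℝ, HasDerivAt (fun s : ℝ => ⟪gradient F (x + s • (z - x)), z - x⟫)
      ⟪hessOp n F (x + s • (z - x)) (z - x), z - x⟫ s := by
    intro s
    have h1 : HasDerivAt (fun s : ℝ => x + s • (z - x)) (z - x) s := by
      simpa using ((hasDerivAt_id s).smul_const (z - x)).const_add x
    have h2 := (hasFDerivAt_gradient hF (hne s)).comp_hasDerivAt s h1
    simpa using h2.inner ℝ (hasDerivAt_const s (z - x))
  have hmono : StrictMono (fun s : ℝ => ⟪gradient F (x + s • (z - x)), z - x⟫) := by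
    refine strictMono_of_deriv_pos fun s => ?_
    rw [(hd s).deriv]
    refine hessOp_pos hF (hne s) fun a ha => ?_
    have h := hli (-1 - a * (1 - s)) (1 - a * s) (by
      rw [← sub_eq_zero] at ha
      rw [← ha]; module)
    have h1 : a = 0 := by linarith [h.1, h.2]
    rw [h1] at h
    linarith [h.2]
  simpa using hmono (zero_lt_one' ℝ)

/-- The map `x ↦ ‖x‖ ∇F(x)`, a 1-homogeneous extension of the inverse Gauss map of the body. -/
def gaussExt (n : ℕ) (F : Euc n → ℝ) (x : Euc n) : Euc n := ‖x‖ • gradient F x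

theorem gaussExt_injOn (hF : IsSupportFn n F) : InjOn (gaussExt n F) {(0 : Euc n)}ᶜ := by
  intro x hx z hz h
  have hx0 : x ≠ 0 := hx
  have hz0 : z ≠ 0 := hz
  have hnx : 0 < ‖x‖ := norm_pos_iff.2 hx0
  have hnz : 0 < ‖z‖ := norm_pos_iff.2 hz0
  have hFx := pos_of_ne hF hx0
  have hFz := pos_of_ne hF hz0
  simp only [gaussExt] at h
  -- `∇F(x) = l ∇F(z)`; the representative `y = c x` of the ray of `x` has `F y = l F z`.
  obtain ⟨l, hl, hgl⟩ : ∃ l : ℝ, 0 < l ∧ gradient F x = l • gradient F z := by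
    refine ⟨‖x‖⁻¹ * ‖z‖, by positivity, ?_⟩
    rw [mul_smul, ← h, smul_smul, inv_mul_cancel₀ hnx.ne', one_smul]
  obtain ⟨c, hc, hcF⟩ : ∃ c : ℝ, 0 < c ∧ c * F x = l * F z :=
    ⟨l * F z / F x, by positivity, by field_simp⟩
  have hy0 : c • x ≠ 0 := smul_ne_zero hc.ne' hx0
  have hgy : gradient F (c • x) = l • gradient F z := by rw [gradient_smul hF hx0 hc, hgl]
  have hFy : F (c • x) = l * F z := by rw [hF.homog c hc, hcF]
  have hiy : ⟪gradient F z, c • x⟫ = F z := by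
    have := inner_gradient_self hF hy0
    rw [hgy, real_inner_smul_left, hFy] at this
    exact mul_left_cancel₀ hl.ne' this
  have hiz := inner_gradient_self hF hz0
  by_cases hli : ∀ a b : ℝ, a • (c • x) + b • z = 0 → a = 0 ∧ b = 0
  · have := inner_gradient_lt hF hli
    rw [hgy, real_inner_smul_left, inner_sub_right, hiy, hiz] at this
    simp at this
  · push Not at hli
    obtain ⟨a, b, hab, hne⟩ := hli
    have h1 : (a + b) * F z = 0 := by
      have := congrArg (fun v => ⟪gradient F z, v⟫) hab
      simp only [inner_add_right, inner_smul_right _ _ a, inner_smul_right _ _ b, hiy, hiz,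
        inner_zero_right] at this
      linarith
    have hb : b = -a := by
      rcases mul_eq_zero.1 h1 with h | h
      · linarith
      · exact absurd h hFz.ne'
    have ha : a ≠ 0 := fun h0 => hne h0 (by rw [hb, h0, neg_zero])
    have hz : z = c • x := by
      rw [hb, neg_smul, ← sub_eq_add_neg, ← smul_sub, smul_eq_zero] at hab
      exact (sub_eq_zero.1 (hab.resolve_left ha)).symm
    rw [hz, gradient_smul hF hx0 hc] at h
    have h2 := smul_left_injective ℝ (gradient_ne_zero hF hx0) h
    rw [norm_smul, Real.norm_of_nonneg hc.le] at h2
    have hc1 : c = 1 := by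
      have : (c - 1) * ‖x‖ = 0 := by linarith
      rcases mul_eq_zero.1 this with h | h
      · linarith
      · exact absurd h hnx.ne'
    rw [hz, hc1, one_smul]

end SupportFn

/-! ### Determinants -/

section Determinant

variable {n : ℕ} {F : Euc n → ℝ}

/-- The derivative of `gaussExt` at `x ≠ 0`. -/
def gaussDeriv (n : ℕ) (F : Euc n → ℝ) (x : Euc n) : Euc n →L[ℝ] Euc n :=
  ‖x‖ • hessOp n F x + (innerSL ℝ (‖x‖⁻¹ • x)).smulRight (gradient F x)

theorem hasFDerivAt_gaussExt (hF : IsSupportFn n F) {x : Euc n} (hx : x ≠ 0) :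
    HasFDerivAt (gaussExt n F) (gaussDeriv n F x) x := by
  have h1 : HasFDerivAt (fun y : Euc n => ‖y‖) (innerSL ℝ (‖x‖⁻¹ • x)) x := by
    have h2 := (hasStrictFDerivAt_norm_sq x).hasFDerivAt.sqrt (by simpa using hx)
    have h3 : (fun y : Euc n => √(‖y‖ ^ 2)) = fun y => ‖y‖ :=
      funext fun y => Real.sqrt_sq (norm_nonneg y)
    rw [h3, Real.sqrt_sq (norm_nonneg x)] at h2
    refine h2.congr_fderiv ?_
    ext v
    simp
    field_simp
  exact h1.smul (hasFDerivAt_gradient hF hx)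

theorem gaussDeriv_smul (hF : IsSupportFn n F) {x : Euc n} (hx : x ≠ 0) {c : ℝ} (hc : 0 < c) :
    gaussDeriv n F (c • x) = gaussDeriv n F x := by
  have h1 : ‖c • x‖⁻¹ • c • x = ‖x‖⁻¹ • x := by
    rw [norm_smul, Real.norm_of_nonneg hc.le, smul_smul]
    congr 1
    field_simp
  rw [gaussDeriv, gaussDeriv, h1, gradient_smul hF hx hc, norm_smul, Real.norm_of_nonneg hc.le,
    ← hessOp_smul hF hx hc, smul_smul, mul_comm c]

/-- On the sphere, `gaussDeriv = (id + u ⊗ x) ∘ (Hess F + x ⊗ x)` with `u = ∇F(x) - x`, and the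
first factor has determinant `1 + ⟪x, u⟫ = F x`. -/
theorem det_gaussDeriv (hF : IsSupportFn n F) {x : Euc n} (hx : ‖x‖ = 1) :
    (gaussDeriv n F x).det = F x * sphDet n F x := by
  have hx0 : x ≠ 0 := by rw [← norm_pos_iff, hx]; exact one_pos
  have h1 : ((gaussDeriv n F x : Euc n →L[ℝ] Euc n) : Euc n →ₗ[ℝ] Euc n) =
      (LinearMap.transvection ((innerSL ℝ x : Euc n →L[ℝ] ℝ) : Euc n →ₗ[ℝ] ℝ)
        (gradient F x - x)) ∘ₗ
      ((hessOp n F x + (innerSL ℝ x).smulRight x : Euc n →L[ℝ] Euc n) : Euc n →ₗ[ℝ] Euc n) := by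
    ext1 v
    have h2 : ⟪x, hessOp n F x v⟫ = 0 := by
      rw [← hessOp_symm hF hx0, hessOp_self hF hx0, inner_zero_left]
    have h3 : ⟪x, hessOp n F x v + ⟪x, v⟫ • x⟫ = ⟪x, v⟫ := by
      rw [inner_add_right, h2, inner_smul_right, real_inner_self_eq_norm_sq, hx]; ring
    change ‖x‖ • hessOp n F x v + ⟪‖x‖⁻¹ • x, v⟫ • gradient F x =
      (hessOp n F x v + ⟪x, v⟫ • x) +
        ⟪x, hessOp n F x v + ⟪x, v⟫ • x⟫ • (gradient F x - x)
    rw [h3, hx]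
    simp only [inv_one, one_smul]
    module
  rw [ContinuousLinearMap.det, h1, LinearMap.det_comp, LinearMap.transvection.det, sphDet]
  congr 1
  change 1 + ⟪x, gradient F x - x⟫ = F x
  rw [inner_sub_right, real_inner_comm, inner_gradient_self hF hx0, real_inner_self_eq_norm_sq, hx]
  ring

theorem sphDet_pos (hF : IsSupportFn n F) {x : Euc n} (hx : ‖x‖ = 1) : 0 < sphDet n F x := by
  have hx0 : x ≠ 0 := by rw [← norm_pos_iff, hx]; exact one_pos
  set M : Euc n →ₗ[ℝ] Euc n :=
    ((hessOp n F x + (innerSL ℝ x).smulRight x : Euc n →L[ℝ] Euc n) : Euc n →ₗ[ℝ] Euc n) with hM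
  have hMv : ∀ v, M v = hessOp n F x v + ⟪x, v⟫ • x := fun v => rfl
  have hsymm : M.IsSymmetric := by
    intro u v
    rw [hMv, hMv, inner_add_left, inner_add_right, hessOp_symm hF hx0, real_inner_smul_left,
      real_inner_smul_right, real_inner_comm x u]
    ring
  have hpos : ∀ v, v ≠ 0 → 0 < ⟪M v, v⟫ := by
    intro v hv
    rw [hMv, inner_add_left, real_inner_smul_left]
    by_cases h : ∃ a : ℝ, v = a • x
    · obtain ⟨a, rfl⟩ := h
      have ha : a ≠ 0 := fun h0 => hv (by rw [h0, zero_smul])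
      rw [map_smul, hessOp_self hF hx0, smul_zero, inner_zero_left, zero_add,
        real_inner_smul_right, real_inner_self_eq_norm_sq, hx]
      have := mul_self_pos.2 ha
      linarith
    · push Not at h
      have := hessOp_pos hF hx0 h
      nlinarith [mul_self_nonneg ⟪x, v⟫]
  have hdet : sphDet n F x = M.det := rfl
  rw [hdet, hsymm.det_eq_prod_eigenvalues (finrank_euclideanSpace_fin)]
  refine Finset.prod_pos fun i _ => ?_
  set e := hsymm.eigenvectorBasis (finrank_euclideanSpace_fin) i with he
  have he1 : ‖e‖ = 1 := (hsymm.eigenvectorBasis (finrank_euclideanSpace_fin)).orthonormal.1 i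
  have h := hpos e (by rw [← norm_pos_iff, he1]; exact one_pos)
  rw [he, hsymm.apply_eigenvectorBasis, real_inner_smul_left, ← he, real_inner_self_eq_norm_sq,
    he1] at h
  simpa using h

theorem radTerm_eq (hF : IsSupportFn n F) {x : Euc n} (hx : ‖x‖ = 1) :
    radTerm n F x = ‖gradient F x‖ := by
  have hx0 : x ≠ 0 := by rw [← norm_pos_iff, hx]; exact one_pos
  have h := inner_gradient_self hF hx0
  rw [radTerm, sphGrad, norm_sub_sq_real, h, real_inner_smul_right, h, norm_smul, hx]
  have : ‖gradient F x‖ ^ 2 - 2 * (F x * F x) + (‖F x‖ * 1) ^ 2 + F x ^ 2 =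
      ‖gradient F x‖ ^ 2 := by
    rw [mul_one, Real.norm_eq_abs, sq_abs]; ring
  rw [this, Real.sqrt_sq (norm_nonneg _)]

end Determinant

/-! ### The area estimate for the radial Gauss map -/

section AreaEstimate

variable {n : ℕ} {F : Euc n → ℝ}

theorem measurable_gradient (F : Euc n → ℝ) : Measurable (gradient F) :=
  (InnerProductSpace.toDual ℝ (Euc n)).symm.continuous.measurable.comp (measurable_fderiv ℝ F)

theorem lintegral_gauss_le (hn : n ≠ 0) (hF : IsSupportFn n F) :
    ∫⁻ x : USphere n, ENNReal.ofReal (F x * sphDet n F x / radTerm n F x ^ n) ∂(sphMeasure n) ≤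
      sphMeasure n univ := by
  set D : Set (Euc n) := {x | x ≠ 0 ∧ ‖gaussExt n F x‖ < 1} with hD
  have hGm : Measurable (gaussExt n F) := measurable_norm.smul (measurable_gradient F)
  have hDm : MeasurableSet D :=
    (measurableSet_singleton (0 : Euc n)).compl.inter (hGm.norm measurableSet_Iio)
  set k : Euc n → ENNReal := fun x => ENNReal.ofReal |(fderiv ℝ (gaussExt n F) x).det| with hk
  have hkm : Measurable k := 
    (ContinuousLinearMap.continuous_det.measurable.comp
      (measurable_fderiv ℝ (gaussExt n F))).abs.ennreal_ofReal
  have h1 : ∫⁻ x in D, k x ≤ volume (ball (0 : Euc n) 1) := by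
    rw [lintegral_abs_det_fderiv_eq_addHaar_image volume hDm
      (fun x hx => (hasFDerivAt_gaussExt hF hx.1).differentiableAt.hasFDerivAt.hasFDerivWithinAt)
      ((gaussExt_injOn hF).mono fun x hx => hx.1)]
    refine measure_mono ?_
    rintro _ ⟨x, hx, rfl⟩
    simp [hx.2]
  have h2 : ∫⁻ x in D, k x = ∫⁻ p : USphere n × Ioi (0 : ℝ), D.indicator k (p.2.1 • p.1.1)
      ∂((sphMeasure n).prod (Measure.volumeIoiPow (n - 1))) := by
    have hmp := (volume : Measure (Euc n)).measurePreserving_homeomorphUnitSphereProd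
    rw [finrank_euclideanSpace_fin] at hmp
    rw [sphMeasure, ← hmp.lintegral_comp_emb (Homeomorph.measurableEmbedding _),
      ← lintegral_indicator hDm]
    have h3 : ∀ x : ({0}ᶜ : Set (Euc n)),
        (homeomorphUnitSphereProd (Euc n) x).2.1 • (homeomorphUnitSphereProd (Euc n) x).1.1
          = x.1 := by
      intro x
      have := (homeomorphUnitSphereProd (Euc n)).symm_apply_apply x
      have h4 := congrArg Subtype.val this
      rwa [homeomorphUnitSphereProd_symm_apply_coe] at h4
    simp_rw [h3]
    rw [lintegral_subtype_comap (measurableSet_singleton (0 : Euc n)).compl,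
      ← lintegral_indicator (measurableSet_singleton (0 : Euc n)).compl]
    refine lintegral_congr fun x => ?_
    by_cases hx : x ∈ D
    · rw [indicator_of_mem (show x ∈ ({0}ᶜ : Set (Euc n)) from hx.1)]
    · rw [indicator_of_notMem hx]
      by_cases hx0 : x ∈ ({0}ᶜ : Set (Euc n))
      · rw [indicator_of_mem hx0, indicator_of_notMem hx]
      · rw [indicator_of_notMem hx0]
  have h3 : ∫⁻ x in D, k x = ∫⁻ x : USphere n,
      ENNReal.ofReal (F x * sphDet n F x / radTerm n F x ^ n) * ENNReal.ofReal (1 / n)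
        ∂(sphMeasure n) := by
    rw [h2, lintegral_prod]
    · refine lintegral_congr fun x => ?_
      have hx1 : ‖x.1‖ = 1 := by simp
      have hx0 : x.1 ≠ 0 := by rw [← norm_pos_iff, hx1]; exact one_pos
      have hg : 0 < ‖gradient F x‖ := norm_pos_iff.2 (gradient_ne_zero hF hx0)
      have h4 : ∀ r : Ioi (0 : ℝ), D.indicator k (r.1 • x.1) =
          (Iio (⟨‖gradient F x‖⁻¹, inv_pos.2 hg⟩ : Ioi (0 : ℝ))).indicator (fun _ => k x) r := by
        intro r
        have hr : 0 < r.1 := r.2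
        have h5 : r.1 • x.1 ∈ D ↔ r ∈ Iio (⟨‖gradient F x‖⁻¹, inv_pos.2 hg⟩ : Ioi (0 : ℝ)) := by
          rw [hD, mem_ofPred_eq, gaussExt, gradient_smul hF hx0 hr, norm_smul, norm_norm, norm_smul,
            hx1, Real.norm_of_nonneg hr.le, mul_one, mem_Iio, ← Subtype.coe_lt_coe,
            lt_inv_comm₀ hr hg, ← one_div, lt_div_iff₀ hr, mul_comm]
          exact and_iff_right (smul_ne_zero hr.ne' hx0)
        by_cases h6 : r.1 • x.1 ∈ D
        · rw [indicator_of_mem h6, indicator_of_mem (h5.1 h6), hk]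
          simp only [(hasFDerivAt_gaussExt hF hx0).fderiv,
            (hasFDerivAt_gaussExt hF (smul_ne_zero hr.ne' hx0)).fderiv, gaussDeriv_smul hF hx0 hr]
        · rw [indicator_of_notMem h6, indicator_of_notMem (fun h => h6 (h5.2 h))]
      simp_rw [h4]
      rw [lintegral_indicator measurableSet_Iio, setLIntegral_const,
        Measure.volumeIoiPow_apply_Iio, hk]
      simp only [(hasFDerivAt_gaussExt hF hx0).fderiv]
      rw [det_gaussDeriv hF hx1, radTerm_eq hF hx1, abs_of_nonneg
        (mul_pos (pos_of_ne hF hx0) (sphDet_pos hF hx1)).le,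
        ← ENNReal.ofReal_mul (mul_pos (pos_of_ne hF hx0) (sphDet_pos hF hx1)).le,
        ← ENNReal.ofReal_mul (by have := pos_of_ne hF hx0; have := sphDet_pos hF hx1; positivity)]
      congr 1
      obtain ⟨m, rfl⟩ := Nat.exists_eq_succ_of_ne_zero hn
      simp only [Nat.succ_eq_add_one, Nat.add_sub_cancel, inv_pow, Nat.cast_add, Nat.cast_one]
      field_simp
    · refine ((hkm.indicator hDm).comp ?_).aemeasurable
      exact (measurable_subtype_coe.comp measurable_snd).smul
        (measurable_subtype_coe.comp measurable_fst)
  rw [h3, lintegral_mul_const' _ _ ENNReal.ofReal_ne_top] at h1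
  have hnpos : (0 : ℝ) < n := by exact_mod_cast Nat.pos_of_ne_zero hn
  have h4 : sphMeasure n univ = n * volume (ball (0 : Euc n) 1) := by
    rw [sphMeasure, Measure.toSphere_apply_univ, finrank_euclideanSpace_fin]
  rw [h4]
  refine le_trans (le_of_eq ?_) (mul_le_mul_right h1 (n : ENNReal))
  rw [mul_comm, mul_assoc, ← ENNReal.ofReal_natCast n, ← ENNReal.ofReal_mul (by positivity),
    one_div_mul_cancel hnpos.ne', ENNReal.ofReal_one, mul_one]

end AreaEstimate

/-! ### The sign of the derivative -/

section Sign

variable {n : ℕ} {F : Euc n → ℝ}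

theorem sphere_ne_zero (x : USphere n) : x.1 ≠ 0 := by
  have hx1 : ‖x.1‖ = 1 := by simp
  rw [← norm_pos_iff, hx1]
  exact one_pos

theorem continuous_restrict_sphere {X : Type*} [TopologicalSpace X] {g : Euc n → X}
    (hg : ContinuousOn g {(0 : Euc n)}ᶜ) : Continuous (fun x : USphere n => g x) :=
  hg.comp_continuous continuous_subtype_val fun x => sphere_ne_zero x

theorem continuous_sphDet (hF : IsSupportFn n F) :
    Continuous (fun x : USphere n => sphDet n F x) := by
  have h1 : Continuous (fun x : USphere n => hessOp n F x) :=
    continuous_restrict_sphere (hessOp_contDiffOn hF).continuousOn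
  have h2 : Continuous (fun x : USphere n => hessOp n F x +
      ((innerSL ℝ x.1).smulRight x.1 : Euc n →L[ℝ] Euc n)) := by fun_prop
  exact ContinuousLinearMap.continuous_det.comp h2

theorem continuous_radTerm (hF : IsSupportFn n F) :
    Continuous (fun x : USphere n => radTerm n F x) := by
  have h1 : Continuous (fun x : USphere n => ‖gradient F x‖) :=
    (continuous_restrict_sphere (gradient_contDiffOn hF).continuousOn).norm
  exact h1.congr fun x => (radTerm_eq hF (by simp)).symm

theorem radTerm_pos (hF : IsSupportFn n F) (x : USphere n) : 0 < radTerm n F x := by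
  rw [radTerm_eq hF (by simp)]
  exact norm_pos_iff.2 (gradient_ne_zero hF (sphere_ne_zero x))

theorem integrable_sphere {g : USphere n → ℝ} (hg : Continuous g) :
    Integrable g (sphMeasure n) := by
  have : IsFiniteMeasure (sphMeasure n) :=
    inferInstanceAs (IsFiniteMeasure (volume : Measure (Euc n)).toSphere)
  exact hg.integrable_of_hasCompactSupport (HasCompactSupport.of_compactSpace g)

theorem integral_gauss_le (hn : n ≠ 0) (hF : IsSupportFn n F) :
    ∫ x : USphere n, F x * sphDet n F x / radTerm n F x ^ n ∂(sphMeasure n) ≤ sphArea n := by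
  have hpos : ∀ x : USphere n, 0 ≤ F x * sphDet n F x / radTerm n F x ^ n := fun x => by
    have h1 := pos_of_ne hF (sphere_ne_zero x)
    have h2 := sphDet_pos hF (x := x.1) (by simp)
    have h3 := radTerm_pos hF x
    positivity
  have : IsFiniteMeasure (sphMeasure n) :=
    inferInstanceAs (IsFiniteMeasure (volume : Measure (Euc n)).toSphere)
  have hc : Continuous fun x : USphere n => F x * sphDet n F x / radTerm n F x ^ n :=
    ((continuous_restrict_sphere hF.smooth.continuousOn).mul (continuous_sphDet hF)).div
      ((continuous_radTerm hF).pow n) fun x => (pow_pos (radTerm_pos hF x) n).ne'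
  rw [integral_eq_lintegral_of_nonneg_ae (Eventually.of_forall hpos) hc.aestronglyMeasurable]
  exact ENNReal.toReal_mono (measure_ne_top _ _) (lintegral_gauss_le hn hF)

/-- The integrand of `P'` has nonnegative integral. This is the Cauchy–Schwarz inequality for
`g = f / φ(1/F)` and the weight `q = r ^ n / (F det)`, in the form
`2 l g ≤ g² q + l² / q` with `l = ∫ g / |S|`, combined with `∫ 1/q ≤ |S|`. -/
theorem integral_deriv_nonneg (hn : n ≠ 0) (hF : IsSupportFn n F) {f : Euc n → ℝ} {φ : ℝ → ℝ}
    (hf : ContinuousOn f {(0 : Euc n)}ᶜ) (hf_pos : ∀ x ∈ USphere n, 0 < f x)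
    (hφ : ContinuousOn φ (Ioi 0)) (hφ_pos : ∀ s ∈ Ioi (0 : ℝ), 0 < φ s) :
    0 ≤ ∫ x : USphere n, -(f x / (F x * φ (1 / F x))) *
      (F x - flowEta n f φ F * f x * radTerm n F x ^ n / (φ (1 / F x) * sphDet n F x))
        ∂(sphMeasure n) := by
  have hFp : ∀ x : USphere n, 0 < F x := fun x => pos_of_ne hF (sphere_ne_zero x)
  have hdp : ∀ x : USphere n, 0 < sphDet n F x := fun x => sphDet_pos hF (by simp)
  have hrp := radTerm_pos hF
  have hφp : ∀ x : USphere n, 0 < φ (1 / F x) := fun x => hφ_pos _ (one_div_pos.2 (hFp x))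
  have hfp : ∀ x : USphere n, 0 < f x := fun x => hf_pos x x.2
  have hFc : Continuous fun x : USphere n => F x :=
    continuous_restrict_sphere hF.smooth.continuousOn
  have hfc : Continuous fun x : USphere n => f x := continuous_restrict_sphere hf
  have hφc : Continuous fun x : USphere n => φ (1 / F x) :=
    hφ.comp_continuous (continuous_const.div hFc fun x => (hFp x).ne')
      fun x => one_div_pos.2 (hFp x)
  set g : USphere n → ℝ := fun x => f x / φ (1 / F x) with hg
  set q : USphere n → ℝ := fun x => radTerm n F x ^ n / (F x * sphDet n F x) with hq
  have hgp : ∀ x, 0 < g x := fun x => div_pos (hfp x) (hφp x)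
  have hqp : ∀ x, 0 < q x := fun x => div_pos (pow_pos (hrp x) n) (mul_pos (hFp x) (hdp x))
  have hgc : Continuous g := hfc.div hφc fun x => (hφp x).ne'
  have hqc : Continuous q := ((continuous_radTerm hF).pow n).div (hFc.mul (continuous_sphDet hF))
    fun x => (mul_pos (hFp x) (hdp x)).ne'
  have hqi : Continuous fun x => 1 / q x := continuous_const.div hqc fun x => (hqp x).ne'
  set a : ℝ := ∫ x, g x ∂(sphMeasure n) with ha
  set b : ℝ := ∫ x, g x ^ 2 * q x ∂(sphMeasure n) with hb
  set s : ℝ := sphArea n with hs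
  have hη : flowEta n f φ F = s / a := rfl
  have hig := integrable_sphere hgc
  have hib : Integrable (fun x => g x ^ 2 * q x) (sphMeasure n) :=
    integrable_sphere ((hgc.pow 2).mul hqc)
  have h1 : ∫ x : USphere n, -(f x / (F x * φ (1 / F x))) *
      (F x - flowEta n f φ F * f x * radTerm n F x ^ n / (φ (1 / F x) * sphDet n F x))
        ∂(sphMeasure n) = s / a * b - a := by
    generalize hc : s / a = c at hη
    rw [ha, hb, ← integral_const_mul, ← integral_sub (hib.const_mul _) hig]
    refine integral_congr_ae (Eventually.of_forall fun x => ?_)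
    have e1 := (hFp x).ne'
    have e2 := (hdp x).ne'
    have e3 := (hφp x).ne'
    simp only [hη, hg, hq]
    field_simp
    ring
  rw [h1]
  have ha0 : 0 ≤ a := integral_nonneg fun x => (hgp x).le
  rcases ha0.eq_or_lt with h0 | hapos
  · rw [← h0]; simp
  have h2 : ∫ x, 1 / q x ∂(sphMeasure n) ≤ s := by
    refine le_trans (le_of_eq ?_) (integral_gauss_le hn hF)
    refine integral_congr_ae (Eventually.of_forall fun x => ?_)
    simp only [hq, one_div_div]
  have h3 : ∀ l : ℝ, 2 * l * a ≤ b + l ^ 2 * s := by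
    intro l
    calc 2 * l * a = ∫ x, 2 * l * g x ∂(sphMeasure n) := by rw [ha, integral_const_mul]
      _ ≤ ∫ x, (g x ^ 2 * q x + l ^ 2 * (1 / q x)) ∂(sphMeasure n) := by
        refine integral_mono (hig.const_mul _)
          (hib.add ((integrable_sphere hqi).const_mul _)) fun x => ?_
        have hqx := hqp x
        have h4 : g x ^ 2 * q x + l ^ 2 * (1 / q x) - 2 * l * g x =
            (g x * q x - l) ^ 2 / q x := by
          field_simp
          ring
        have h5 : 0 ≤ (g x * q x - l) ^ 2 / q x := by positivity
        simp only
        linarith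
      _ = b + l ^ 2 * ∫ x, 1 / q x ∂(sphMeasure n) := by
        rw [integral_add hib ((integrable_sphere hqi).const_mul _), integral_const_mul]
      _ ≤ b + l ^ 2 * s := by gcongr
  have hs0 : 0 ≤ s := ENNReal.toReal_nonneg
  have hspos : 0 < s := by
    rcases hs0.eq_or_lt with h | h
    · exfalso
      have := h3 ((b + 1) / a)
      rw [← h] at this
      have e : 2 * ((b + 1) / a) * a = 2 * (b + 1) := by field_simp
      have hb0 : 0 ≤ b := integral_nonneg fun x => by have := hqp x; positivity
      rw [e] at this
      linarith
    · exact h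
  have h4 := h3 (a / s)
  have h5 : s / a * b - a = (s / a) * (b + (a / s) ^ 2 * s - 2 * (a / s) * a) := by
    field_simp
    ring
  rw [h5]
  exact mul_nonneg (by positivity) (by linarith)

end Sign

/-! ### Differentiation of the functional -/

theorem hasDerivAt_R {φ R : ℝ → ℝ} (hφ : ContinuousOn φ (Ioi 0))
    (hφ_pos : ∀ s ∈ Ioi (0 : ℝ), 0 < φ s)
    (hR : ∀ s ∈ Ioi (0 : ℝ), IntegrableOn (fun t => 1 / (t * φ t)) (Ioo 0 s) ∧
      R s = ∫ t in Ioo (0 : ℝ) s, 1 / (t * φ t)) {s : ℝ} (hs : 0 < s) :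
    HasDerivAt R (1 / (s * φ s)) s := by
  have hc : ContinuousOn (fun t => 1 / (t * φ t)) (Ioi 0) :=
    continuousOn_const.div (continuousOn_id.mul hφ) fun t ht => (mul_pos ht (hφ_pos t ht)).ne'
  have hi : IntervalIntegrable (fun t => 1 / (t * φ t)) volume 0 s := by
    rw [intervalIntegrable_iff_integrableOn_Ioo_of_le hs.le]
    exact (hR s hs).1
  have h := intervalIntegral.integral_hasDerivAt_right hi
    (hc.stronglyMeasurableAtFilter isOpen_Ioi s hs) (hc.continuousAt (Ioi_mem_nhds hs))
  refine h.congr_of_eventuallyEq ?_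
  filter_upwards [Ioi_mem_nhds hs] with u hu
  rw [(hR u hu).2, intervalIntegral.integral_of_le (le_of_lt hu), integral_Ioc_eq_integral_Ioo]

/-- the functional `P` is non-decreasing along the flow when
`ℜ(s) = ∫₀ˢ dt/(t φ(t))`. -/
theorem P_nondecreasing
    (n : ℕ) (hn : 2 ≤ n)
    (f : Euc n → ℝ) (φ : ℝ → ℝ) (T : ℝ) (hT : 0 < T)
    (hf_smooth : ContDiffOn ℝ (⊤ : ℕ∞) f {(0 : Euc n)}ᶜ)
    (hf_pos : ∀ x ∈ USphere n, 0 < f x)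
    (hφ_smooth : ContDiffOn ℝ (⊤ : ℕ∞) φ (Ioi 0))
    (hφ_pos : ∀ s ∈ Ioi (0 : ℝ), 0 < φ s)
    (R : ℝ → ℝ)
    (hR : ∀ s ∈ Ioi (0 : ℝ), IntegrableOn (fun t => 1 / (t * φ t)) (Ioo 0 s) ∧
      R s = ∫ t in Ioo (0 : ℝ) s, 1 / (t * φ t))
    (H : ℝ → Euc n → ℝ) (hH : IsFlowSol n f φ (Ico 0 T) H) :
    MonotoneOn (fun t => sphInt n (fun x => R (1 / H t x) * f x)) (Ico 0 T) := by
  have hφc := hφ_smooth.continuousOn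
  have hfc : Continuous fun x : USphere n => f x :=
    continuous_restrict_sphere hf_smooth.continuousOn
  have hRd : ∀ s : ℝ, 0 < s → HasDerivAt R (1 / (s * φ s)) s := fun s hs =>
    hasDerivAt_R hφc hφ_pos hR hs
  have hRc : ContinuousOn R (Ioi 0) := fun s hs => (hRd s hs).continuousAt.continuousWithinAt
  have hpos : ∀ t ∈ Ico 0 T, ∀ x : USphere n, 0 < H t x := fun t ht x =>
    (hH.body t ht).pos x x.2
  have hHc : ContinuousOn (fun p : ℝ × USphere n => H p.1 p.2) (Ico 0 T ×ˢ univ) := by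
    refine hH.smooth.continuousOn.comp (f := fun p : ℝ × USphere n => (p.1, p.2.1))
      (by fun_prop) ?_
    exact fun p hp => ⟨hp.1, sphere_ne_zero p.2⟩
  have hHc' : ContinuousOn (fun p : ℝ × USphere n => 1 / H p.1 p.2) (Ico 0 T ×ˢ univ) :=
    continuousOn_const.div hHc fun p hp => (hpos p.1 hp.1 p.2).ne'
  have hΦc : ContinuousOn (fun p : ℝ × USphere n => R (1 / H p.1 p.2) * f p.2)
      (Ico 0 T ×ˢ univ) :=
    (hRc.comp hHc' fun p hp => one_div_pos.2 (hpos p.1 hp.1 p.2)).mul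
      (hfc.comp continuous_snd).continuousOn
  have hsub : ∀ t ∈ Ico 0 T, Continuous fun x : USphere n => R (1 / H t x) * f x :=
    fun t ht => hΦc.comp_continuous (f := fun x : USphere n => (t, x)) (by fun_prop)
      fun x => ⟨ht, mem_univ _⟩
  have : IsFiniteMeasure (sphMeasure n) :=
    inferInstanceAs (IsFiniteMeasure (volume : Measure (Euc n)).toSphere)
  -- The right-hand side of the flow is replaced by the time derivative of `H`, whose joint
  -- continuity in `(t, x)` is immediate from the smoothness of `H`.
  set K : ℝ × USphere n → ℝ := fun p =>
    fderiv ℝ (fun p : ℝ × Euc n => H p.1 p.2) (p.1, p.2.1) (1, 0) with hK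
  have hU : IsOpen (Ioo 0 T ×ˢ ({(0 : Euc n)}ᶜ : Set (Euc n))) :=
    isOpen_Ioo.prod isOpen_compl_singleton
  have hsm : ContDiffOn ℝ (⊤ : ℕ∞) (fun p : ℝ × Euc n => H p.1 p.2)
      (Ioo 0 T ×ˢ {(0 : Euc n)}ᶜ) :=
    hH.smooth.mono (prod_mono Ioo_subset_Ico_self subset_rfl)
  have hKc : ContinuousOn K (Ioo 0 T ×ˢ univ) := by
    have h1 : ContinuousOn (fderiv ℝ (fun p : ℝ × Euc n => H p.1 p.2))
        (Ioo 0 T ×ˢ {(0 : Euc n)}ᶜ) := hsm.continuousOn_fderiv_of_isOpen hU (by simp)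
    have h2 : ContinuousOn (fun p : ℝ × USphere n =>
        fderiv ℝ (fun p : ℝ × Euc n => H p.1 p.2) (p.1, p.2.1)) (Ioo 0 T ×ˢ univ) :=
      h1.comp (f := fun p : ℝ × USphere n => (p.1, p.2.1)) (by fun_prop)
        fun p hp => ⟨hp.1, sphere_ne_zero p.2⟩
    exact h2.clm_apply continuousOn_const
  have hKd : ∀ t ∈ Ioo 0 T, ∀ x : USphere n, HasDerivAt (fun s => H s x) (K (t, x)) t := by
    intro t ht x
    have h1 : HasFDerivAt (fun p : ℝ × Euc n => H p.1 p.2)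
        (fderiv ℝ (fun p : ℝ × Euc n => H p.1 p.2) (t, x.1)) (t, x.1) :=
      ((hsm.contDiffAt (hU.mem_nhds (show (t, x.1) ∈ _ from ⟨ht, sphere_ne_zero x⟩))).differentiableAt
        (by simp)).hasFDerivAt
    exact h1.comp_hasDerivAt (f := fun s : ℝ => (s, x.1)) t
      ((hasDerivAt_id t).prodMk (hasDerivAt_const t x.1))
  have hKeq : ∀ t ∈ Ioo 0 T, ∀ x : USphere n, K (t, x) =
      H t x - flowEta n f φ (H t) * f x * radTerm n (H t) x ^ n /
        (φ (1 / H t x) * sphDet n (H t) x) := fun t ht x =>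
    (hKd t ht x).unique ((hH.eqn t (Ioo_subset_Ico_self ht) x x.2).hasDerivAt
      (Ico_mem_nhds ht.1 ht.2))
  set W : ℝ → USphere n → ℝ := fun t x => -(f x / (H t x * φ (1 / H t x))) * K (t, x) with hW
  have hWc : ContinuousOn (fun p : ℝ × USphere n => W p.1 p.2) (Ioo 0 T ×ˢ univ) := by
    have hle : Ioo 0 T ×ˢ (univ : Set (USphere n)) ⊆ Ico 0 T ×ˢ univ :=
      prod_mono Ioo_subset_Ico_self subset_rfl
    have h1 := hHc.mono hle
    have h2 : ContinuousOn (fun p : ℝ × USphere n => φ (1 / H p.1 p.2)) (Ioo 0 T ×ˢ univ) :=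
      hφc.comp (hHc'.mono hle) fun p hp => one_div_pos.2 (hpos p.1 (hle hp).1 p.2)
    refine (((hfc.comp continuous_snd).continuousOn.div (h1.mul h2) fun p hp => ?_).neg).mul hKc
    have h3 := hpos p.1 (hle hp).1 p.2
    exact (mul_pos h3 (hφ_pos _ (one_div_pos.2 h3))).ne'
  have hWd : ∀ t ∈ Ioo 0 T, ∀ x : USphere n,
      HasDerivAt (fun s => R (1 / H s x) * f x) (W t x) t := by
    intro t ht x
    have h0 := hpos t (Ioo_subset_Ico_self ht) x
    have h1 : HasDerivAt (fun s => 1 / H s x) (-K (t, x) / H t x ^ 2) t := by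
      simp only [one_div]
      exact (hKd t ht x).inv h0.ne'
    have h2 := ((hRd _ (one_div_pos.2 h0)).comp t h1).mul_const (f x)
    refine h2.congr_deriv ?_
    have h3 := (hφ_pos _ (one_div_pos.2 h0)).ne'
    simp only [hW]
    field_simp
  have hder : ∀ t ∈ Ioo 0 T, HasDerivAt (fun t => sphInt n (fun x => R (1 / H t x) * f x))
      (∫ x, W t x ∂(sphMeasure n)) t := by
    intro t ht
    obtain ⟨a, ha0, hat⟩ := exists_between ht.1
    obtain ⟨b, htb, hbT⟩ := exists_between ht.2
    have hab : Icc a b ⊆ Ioo 0 T := fun s hs => ⟨ha0.trans_le hs.1, hs.2.trans_lt hbT⟩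
    obtain ⟨C, hC⟩ := (isCompact_Icc.prod (isCompact_univ : IsCompact
      (univ : Set (USphere n)))).exists_bound_of_continuousOn
        (hWc.mono (prod_mono hab subset_rfl))
    refine (hasDerivAt_integral_of_dominated_loc_of_deriv_le (μ := sphMeasure n)
      (F := fun (t : ℝ) (x : USphere n) => R (1 / H t x) * f x) (F' := W)
      (bound := fun _ => C) (Icc_mem_nhds hat htb) ?_ ?_ ?_ ?_ (integrable_const C) ?_).2
    · filter_upwards [Icc_mem_nhds hat htb] with s hs
      exact (hsub s (Ioo_subset_Ico_self (hab hs))).aestronglyMeasurable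
    · exact integrable_sphere (hsub t (Ioo_subset_Ico_self ht))
    · have : Continuous (W t) := hWc.comp_continuous (f := fun x : USphere n => (t, x))
        (by fun_prop) fun x => ⟨ht, mem_univ _⟩
      exact this.aestronglyMeasurable
    · exact Eventually.of_forall fun x s hs => hC (s, x) ⟨hs, mem_univ _⟩
    · exact Eventually.of_forall fun x s hs => hWd s (hab hs) x
  refine monotoneOn_of_deriv_nonneg (convex_Ico 0 T) ?_ ?_ ?_
  · rw [continuousOn_iff_continuous_domRestrict]
    have h1 : Continuous (fun p : Ico 0 T × USphere n => R (1 / H p.1 p.2) * f p.2) :=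
      hΦc.comp_continuous (f := fun p : Ico 0 T × USphere n => (p.1.1, p.2)) (by fun_prop)
        fun p => ⟨p.1.2, mem_univ _⟩
    have : LocallyCompactSpace (Ico 0 T) := isLocallyClosed_Ico.locallyCompactSpace
    have h2 := continuous_parametric_integral_of_continuous (μ := sphMeasure n)
      (f := fun (t : Ico 0 T) (x : USphere n) => R (1 / H t x) * f x) h1 isCompact_univ
    simp only [setIntegral_univ] at h2
    exact h2
  · rw [interior_Ico]
    exact fun t ht => (hder t ht).differentiableAt.differentiableWithinAt
  · rw [interior_Ico]
    intro t ht
    rw [(hder t ht).deriv]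
    have h1 := integral_deriv_nonneg (by omega) (hH.body t (Ioo_subset_Ico_self ht))
      hf_smooth.continuousOn hf_pos hφc hφ_pos
    simpa only [hW, hKeq t ht] using h1
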